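/- arXiv:2005.14125 — 2 statements merged into one kernel-verified Lean document; each statement's English description precedes it below -/
import Mathlib

section
/- Let X_1, ..., X_n be compact Hausdorff spaces, X = X_1 × ... × X_n, and let M = {∑_{i=1}^n g_i(x_i) : g_i ∈ C(X_i), i = 1, ..., n}. Then for every f ∈ C(X), the error of best uniform approximation E(f) = inf_{g∈M} ‖f − g‖_{C(X)} satisfies E(f) = sup |∑_{j=1}^m λ_j f(x_j)|, where the supremum is taken over all minimal projection cycles {x_1, ..., x_m} ⊆ X together with associated vectors λ = (λ_1, ..., λ_m) normalized so that ∑_{j=1}^m |λ_j| = 1. -/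
open scoped Classical

theorem sum_mul_le_of_minimal_support {ι : Type*} [Fintype ι] (W : Submodule ℝ (ι → ℝ))
    (F : ι → ℝ) (R : ℝ)
    (h : ∀ c ∈ W, c ≠ 0 →
      (∀ μ ∈ W, μ ≠ 0 → Function.support μ ⊆ Function.support c →
        Function.support μ = Function.support c) →
      ∑ j, c j * F j ≤ R * ∑ j, |c j|) (c : ι → ℝ) (hc : c ∈ W) :
    ∑ j, c j * F j ≤ R * ∑ j, |c j| := by
  induction hN : (Function.support c).ncard using Nat.strong_induction_on generalizing c with
  | _ N ih =>
  have ih' : ∀ d ∈ W, Function.support d ⊂ Function.support c →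
      ∑ j, d j * F j ≤ R * ∑ j, |d j| := fun d hd hlt =>
    ih _ (hN ▸ Set.ncard_lt_ncard hlt (Set.toFinite _)) d hd rfl
  by_cases hc0 : c = 0
  · simp [hc0]
  by_cases hmin : ∀ μ ∈ W, μ ≠ 0 → Function.support μ ⊆ Function.support c →
      Function.support μ = Function.support c
  · exact h c hc hc0 hmin
  have step : ∀ μ ∈ W, Function.support μ ⊆ Function.support c →
      ∑ j, μ j * F j - R * ∑ j, SignType.sign (c j) * μ j ≤ 0 → (∃ j, 0 < c j * μ j) →
      ∑ j, c j * F j ≤ R * ∑ j, |c j| := by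
    rintro μ hμ hsub hD ⟨j₀, hj₀⟩
    obtain ⟨j, hj, hjmin⟩ := Finset.exists_min_image
      (Finset.univ.filter fun j => 0 < c j * μ j) (fun j => c j / μ j) ⟨j₀, by simpa using hj₀⟩
    simp only [Finset.mem_filter, Finset.mem_univ, true_and] at hj hjmin
    have hμj : μ j ≠ 0 := by rintro h0; simp [h0] at hj
    have hcj : c j ≠ 0 := by rintro h0; simp [h0] at hj
    set t := c j / μ j with ht
    have htpos : 0 < t := by
      have : t = c j * μ j / (μ j) ^ 2 := by rw [ht]; field_simp
      rw [this]; positivity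
    have habs : ∀ k, |(c - t • μ) k| = |c k| - t * (SignType.sign (c k) * μ k) := by
      intro k
      simp only [Pi.sub_apply, Pi.smul_apply, smul_eq_mul]
      rcases lt_trichotomy (c k) 0 with hk | hk | hk
      · have : c k - t * μ k ≤ 0 := by
          by_cases hm : μ k < 0
          · have := (le_div_iff_of_neg hm).1 (hjmin k (mul_pos_of_neg_of_neg hk hm))
            linarith
          · nlinarith
        rw [abs_of_nonpos this, abs_of_neg hk, sign_neg hk]
        simp; ring
      · have : μ k = 0 := by
          by_contra hne
          exact hsub hne hk
        simp [this, hk]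
      · have : 0 ≤ c k - t * μ k := by
          by_cases hm : 0 < μ k
          · have := (le_div_iff₀ hm).1 (hjmin k (mul_pos hk hm))
            linarith
          · nlinarith
        rw [abs_of_nonneg this, abs_of_pos hk, sign_pos hk]
        simp
    have hss : Function.support (c - t • μ) ⊂ Function.support c := by
      refine (Set.ssubset_iff_of_subset ?_).2 ⟨j, hcj, ?_⟩
      · intro k hk hck
        have : μ k = 0 := by
          by_contra hne
          exact hsub hne hck
        exact hk (by simp [this, hck])
      · simp [ht, hμj]
    have key := ih' _ (W.sub_mem hc (W.smul_mem t hμ)) hss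
    simp only [habs] at key
    simp only [Finset.sum_sub_distrib, ← Finset.mul_sum, Pi.sub_apply, Pi.smul_apply,
      smul_eq_mul, sub_mul, mul_assoc] at key
    nlinarith
  have main : ∀ μ ∈ W, μ ≠ 0 → Function.support μ ⊂ Function.support c →
      ∑ j, μ j * F j - R * ∑ j, SignType.sign (c j) * μ j ≤ 0 →
      ∑ j, c j * F j ≤ R * ∑ j, |c j| := by
    intro μ hμ hμ0 hss hD
    by_cases hpos : ∃ j, 0 < c j * μ j
    · exact step μ hμ hss.subset hD hpos
    push Not at hpos
    obtain ⟨j, hj⟩ := Function.ne_iff.1 hμ0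
    have hneg : 0 < c j * (-μ) j := by
      have : c j * μ j ≠ 0 := mul_ne_zero (hss.subset hj) hj
      have := lt_of_le_of_ne (hpos j) this
      simpa using this
    have habs : ∀ k, |(-μ) k| = -(SignType.sign (c k) * μ k) := by
      intro k
      rw [Pi.neg_apply, abs_neg]
      rcases lt_trichotomy (c k) 0 with hk | hk | hk
      · rw [abs_of_nonneg (by nlinarith [hpos k]), sign_neg hk]; simp
      · have : μ k = 0 := by
          by_contra hne
          exact hss.subset hne hk
        simp [this]
      · rw [abs_of_nonpos (by nlinarith [hpos k]), sign_pos hk]; simp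
    have key := ih' (-μ) (W.neg_mem hμ) (by rwa [Function.support_neg])
    simp only [habs] at key
    simp only [Finset.sum_neg_distrib, Pi.neg_apply, neg_mul] at key
    refine step (-μ) (W.neg_mem hμ) (by simpa using hss.subset) ?_ ⟨j, hneg⟩
    simp only [Pi.neg_apply, neg_mul, mul_neg, Finset.sum_neg_distrib]
    linarith
  push Not at hmin
  obtain ⟨μ, hμ, hμ0, hsub, hne⟩ := hmin
  have hss := hsub.ssubset_of_ne hne
  rcases le_total (∑ j, μ j * F j - R * ∑ j, SignType.sign (c j) * μ j) 0 with hD | hD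
  · exact main μ hμ hμ0 hss hD
  · refine main (-μ) (W.neg_mem hμ) (neg_ne_zero.2 hμ0) (by rwa [Function.support_neg]) ?_
    simp only [Pi.neg_apply, neg_mul, mul_neg, Finset.sum_neg_distrib]
    linarith

theorem exists_mem_forall_abs_sub_le {ι : Type*} [Fintype ι] (M : Submodule ℝ (ι → ℝ))
    (F : ι → ℝ) {R : ℝ} (hR : 0 ≤ R)
    (h : ∀ c : ι → ℝ, (∀ g ∈ M, ∑ j, c j * g j = 0) → ∑ j, c j * F j ≤ R * ∑ j, |c j|) :
    ∃ g ∈ M, ∀ j, |F j - g j| ≤ R := by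
  by_contra! hcon
  have hdisj : Disjoint (Metric.closedBall F R) (M : Set (ι → ℝ)) := by
    rw [Set.disjoint_left]
    intro g hg hgM
    obtain ⟨j, hj⟩ := hcon g hgM
    have := (dist_pi_le_iff hR).1 (Metric.mem_closedBall.1 hg) j
    rw [dist_comm, Real.dist_eq] at this
    linarith
  obtain ⟨l, u, v, hlu, huv, hvl⟩ := geometric_hahn_banach_compact_closed
    (convex_closedBall F R) (isCompact_closedBall F R) M.convex
    M.closed_of_finiteDimensional hdisj
  have hl : ∀ g : ι → ℝ, l g = ∑ j, l (Pi.single j 1) * g j := by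
    intro g
    conv_lhs => rw [← Finset.univ_sum_single g]
    rw [map_sum]
    refine Finset.sum_congr rfl fun j _ => ?_
    have : Pi.single j (g j) = g j • (Pi.single j 1 : ι → ℝ) := by
      rw [← Pi.single_smul, smul_eq_mul, mul_one]
    rw [this, map_smul, smul_eq_mul, mul_comm]
  have hv : v < 0 := by simpa using hvl 0 M.zero_mem
  have hM : ∀ g ∈ M, l g = 0 := by
    intro g hg
    by_contra hne
    have := hvl ((v / l g) • g) (M.smul_mem _ hg)
    rw [map_smul, smul_eq_mul, div_mul_cancel₀ _ hne] at this
    exact lt_irrefl _ this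
  have key := h (fun j => -l (Pi.single j 1)) fun g hg => by
    simp [← hl, hM g hg]
  have hball := hlu (F + fun j => R * SignType.sign (l (Pi.single j 1))) (by
    rw [Metric.mem_closedBall, dist_pi_le_iff hR]
    intro j
    rw [Real.dist_eq]
    rcases lt_trichotomy (l (Pi.single j 1)) 0 with hk | hk | hk
    · simp [sign_neg hk, abs_of_nonneg hR]
    · simp [hk, hR]
    · simp [sign_pos hk, abs_of_nonneg hR])
  rw [map_add, hl F, hl fun j => _] at hball
  have hs : ∑ j, l (Pi.single j 1) * (R * SignType.sign (l (Pi.single j 1)))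
      = R * ∑ j, |l (Pi.single j 1)| := by
    rw [Finset.mul_sum]
    refine Finset.sum_congr rfl fun j _ => ?_
    rw [← self_mul_sign (l (Pi.single j 1))]
    ring
  simp only [abs_neg, neg_mul, Finset.sum_neg_distrib] at key
  linarith

/-- The values of the normalized functionals supported on minimal projection cycles. -/
def minimalCycleValues {n : ℕ} {X : Fin n → Type*} (f : (∀ i, X i) → ℝ) : Set ℝ :=
  {v : ℝ | ∃ (m : ℕ) (x : Fin m → ∀ i, X i) (lam : Fin m → ℝ),
        Function.Injective x ∧ (∀ j, lam j ≠ 0) ∧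
        (∀ (i : Fin n) (t : X i),
          ∑ j ∈ Finset.univ.filter (fun j => x j i = t), lam j = 0) ∧
        (¬ ∃ (s : Finset (Fin m)) (mu : Fin m → ℝ), s ≠ Finset.univ ∧ s.Nonempty ∧
          (∀ j ∈ s, mu j ≠ 0) ∧
          ∀ (i : Fin n) (t : X i),
            ∑ j ∈ s.filter (fun j => x j i = t), mu j = 0) ∧
        (∑ j, |lam j|) = 1 ∧
        v = |∑ j, lam j * f (x j)|}

theorem sum_mul_le_of_minimalCycleValues_le {n : ℕ} {X : Fin n → Type*} (f : (∀ i, X i) → ℝ)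
    {R : ℝ} (hR : ∀ v ∈ minimalCycleValues f, v ≤ R) (G : Finset (∀ i, X i)) (c : G → ℝ)
    (hc : ∀ (i : Fin n) (t : X i), ∑ p : G, (if p.1 i = t then c p else 0) = 0) :
    ∑ p, c p * f p ≤ R * ∑ p, |c p| := by
  let W : Submodule ℝ (G → ℝ) :=
    { carrier := {c | ∀ (i : Fin n) (t : X i), ∑ p : G, (if p.1 i = t then c p else 0) = 0}
      zero_mem' := by simp
      add_mem' := by
        intro a b ha hb i t
        refine Eq.trans ?_ ((congrArg₂ (· + ·) (ha i t) (hb i t)).trans (add_zero 0))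
        rw [← Finset.sum_add_distrib]
        refine Finset.sum_congr rfl fun p _ => ?_
        split_ifs <;> simp
      smul_mem' := by
        intro r a ha i t
        refine Eq.trans ?_ ((congrArg (r * ·) (ha i t)).trans (mul_zero r))
        rw [Finset.mul_sum]
        refine Finset.sum_congr rfl fun p _ => ?_
        split_ifs <;> simp }
  refine sum_mul_le_of_minimal_support W (fun p => f p) R ?_ c hc
  clear c hc
  intro c hc hc0 hmin
  obtain ⟨m, y, hy, hcy, hrange⟩ : ∃ (m : ℕ) (y : Fin m → G), Function.Injective y ∧
      (∀ j, c (y j) ≠ 0) ∧ ∀ p ∉ Set.range y, c p = 0 := by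
    let e := (Finset.univ.filter fun p => c p ≠ 0).equivFin
    refine ⟨_, fun j => (e.symm j).1, Subtype.val_injective.comp e.symm.injective,
      fun j => (Finset.mem_filter.1 (e.symm j).2).2, fun p hp => ?_⟩
    by_contra hne
    exact hp ⟨e ⟨p, by simpa using hne⟩, congrArg Subtype.val (e.symm_apply_apply _)⟩
  set N := ∑ p, |c p| with hNdef
  have hN : 0 < N := by
    obtain ⟨p, hp⟩ := Function.ne_iff.1 hc0
    exact Finset.sum_pos' (fun _ _ => abs_nonneg _) ⟨p, Finset.mem_univ _, abs_pos.2 hp⟩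
  have key := hR _ ⟨_, fun j => (y j).1, fun j => c (y j) / N, Subtype.val_injective.comp hy,
    fun j => div_ne_zero (hcy j) hN.ne', ?_, ?_, ?_, rfl⟩
  · have hsum : ∑ j, c (y j) / N * f (y j) = (∑ p, c p * f p) / N := by
      rw [Finset.sum_div]
      refine Fintype.sum_of_injective y hy _ _ (fun p hp => by simp [hrange p hp]) fun j => ?_
      ring
    rw [hsum] at key
    have := (le_abs_self _).trans key
    rwa [div_le_iff₀ hN] at this
  · intro i t
    refine Eq.trans ?_ ((congrArg (· / N) (hc i t)).trans (zero_div N))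
    rw [Finset.sum_filter, Finset.sum_div]
    refine Fintype.sum_of_injective y hy _ _ (fun p hp => by simp [hrange p hp]) fun j => ?_
    split_ifs <;> simp
  · rintro ⟨s, mu, hs, ⟨j, hj⟩, hmu, hsum⟩
    let μ : G → ℝ := Function.extend y (fun j => if j ∈ s then mu j else 0) 0
    have hμy : ∀ j, μ (y j) = if j ∈ s then mu j else 0 := fun j => hy.extend_apply _ _ j
    have hμr : ∀ p ∉ Set.range y, μ p = 0 := fun p hp => Function.extend_apply' _ _ _ hp
    have hμW : μ ∈ W := by
      intro i t
      have hs' : s.filter (fun j => (y j).1 i = t) =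
          Finset.univ.filter fun j => (y j).1 i = t ∧ j ∈ s := by
        ext j; simp [and_comm]
      refine Eq.trans ?_ (hsum i t)
      rw [hs', Finset.sum_filter]
      refine (Fintype.sum_of_injective y hy _ _ (fun p hp => by simp [hμr p hp])
        fun j => ?_).symm
      rw [hμy, ite_and]
    have hsupp := hmin μ hμW (fun h0 => hmu j hj (by simpa [hj, h0] using (hμy j).symm)) (by
      intro p hp
      by_contra hcp
      by_cases hpr : p ∈ Set.range y
      · obtain ⟨k, rfl⟩ := hpr
        exact hcp (hcy k)
      · exact hp (hμr p hpr))
    refine hs (Finset.eq_univ_iff_forall.2 fun k => ?_)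
    by_contra hk
    have : y k ∈ Function.support μ := hsupp ▸ hcy k
    exact this (by simp [hμy, hk])
  · rw [← div_self hN.ne', hNdef, Finset.sum_div]
    refine Fintype.sum_of_injective y hy _ _ (fun p hp => by simp [hrange p hp]) fun j => ?_
    rw [abs_div, ← hNdef, abs_of_pos hN]

theorem exists_forall_mem_abs_sub_sum_le {n : ℕ} {X : Fin n → Type*} (f : (∀ i, X i) → ℝ)
    {R : ℝ} (hR0 : 0 ≤ R) (hR : ∀ v ∈ minimalCycleValues f, v ≤ R) (G : Finset (∀ i, X i)) :
    ∃ g : ∀ i, X i → ℝ, ∀ p ∈ G, |f p - ∑ i, g i (p i)| ≤ R := by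
  let L : (∀ i, X i → ℝ) →ₗ[ℝ] (G → ℝ) :=
    { toFun := fun g p => ∑ i, g i (p.1 i)
      map_add' := by intro a b; ext p; simp [Finset.sum_add_distrib]
      map_smul' := by intro r a; ext p; simp [Finset.mul_sum] }
  obtain ⟨-, ⟨g, rfl⟩, hg⟩ := exists_mem_forall_abs_sub_le (LinearMap.range L) (fun p => f p) hR0
    fun c hc => sum_mul_le_of_minimalCycleValues_le f hR G c fun i t => by
      refine Eq.trans ?_ (hc _ ⟨Pi.single i (Pi.single t 1), rfl⟩)
      refine Finset.sum_congr rfl fun p _ => ?_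
      have : L (Pi.single i (Pi.single t 1)) p = if p.1 i = t then 1 else 0 := by
        change ∑ k, (Pi.single i (Pi.single t 1) : ∀ i, X i → ℝ) k (p.1 k) = _
        rw [Finset.sum_eq_single i]
        · simp [Pi.single_apply]
        · intro k _ hk
          simp [hk]
        · simp
      simp [this]
  exact ⟨g, fun p hp => hg ⟨p, hp⟩⟩

theorem exists_finset_partitionOfUnity {Y : Type*} [UniformSpace Y] [CompactSpace Y] [T2Space Y]
    {V : Set (Y × Y)} (hV : V ∈ uniformity Y) :
    ∃ (T : Finset Y) (φ : Y → Y → ℝ), (∀ t, Continuous (φ t)) ∧ (∀ t x, 0 ≤ φ t x) ∧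
      (∀ x, ∑ t ∈ T, φ t x = 1) ∧ ∀ t x, φ t x ≠ 0 → (t, x) ∈ V := by
  obtain ⟨φ, hφ⟩ := PartitionOfUnity.exists_isSubordinate isClosed_univ
    (fun t : Y => interior (UniformSpace.ball t V)) (fun _ => isOpen_interior)
    (fun x _ => Set.mem_iUnion.2 ⟨x, mem_interior_iff_mem_nhds.2 (UniformSpace.ball_mem_nhds x hV)⟩)
  have hfin := φ.locallyFinite.finite_nonempty_of_compact
  refine ⟨hfin.toFinset, fun t => φ t, fun t => (φ t).continuous, φ.nonneg, fun x => ?_,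
    fun t x h => interior_subset (s := UniformSpace.ball t V) (hφ t (subset_tsupport _ h))⟩
  rw [← φ.sum_eq_one (Set.mem_univ x)]
  refine (finsum_eq_sum_of_support_subset _ fun t ht => ?_).symm
  exact hfin.mem_toFinset.2 ⟨x, ht⟩

theorem exists_continuous_abs_sub_sum_le {n : ℕ} {X : Fin n → Type*} [∀ i, UniformSpace (X i)]
    [∀ i, CompactSpace (X i)] [∀ i, T2Space (X i)] {f : (∀ i, X i) → ℝ} (hf : Continuous f)
    {R ε : ℝ} (hε : 0 < ε)
    (h : ∀ G : Finset (∀ i, X i), ∃ g : ∀ i, X i → ℝ, ∀ p ∈ G, |f p - ∑ i, g i (p i)| ≤ R) :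
    ∃ g : ∀ i, X i → ℝ, (∀ i, Continuous (g i)) ∧ ∀ x, |f x - ∑ i, g i (x i)| ≤ R + ε := by
  have hu := CompactSpace.uniformContinuous_of_continuous hf (Metric.dist_mem_uniformity hε)
  rw [Filter.mem_map, Pi.uniformity] at hu
  obtain ⟨V', hV', hVeq⟩ := Filter.exists_iInter_of_mem_iInf hu
  choose V hV hVsub using fun i => Filter.mem_comap.1 (hV' i)
  choose T φ hcont hnonneg hsum hsupp using fun i => exists_finset_partitionOfUnity (hV i)
  obtain ⟨g, hg⟩ := h (Fintype.piFinset T)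
  refine ⟨fun i x => ∑ t ∈ T i, φ i t x * g i t,
    fun i => continuous_finsetSum _ fun t _ => (hcont i t).mul continuous_const, fun x => ?_⟩
  let w : (∀ i, X i) → ℝ := fun p => ∏ i, φ i (p i) (x i)
  have hw0 : ∀ p, 0 ≤ w p := fun p => Finset.prod_nonneg fun i _ => hnonneg i _ _
  have hw1 : ∑ p ∈ Fintype.piFinset T, w p = 1 := by
    simp only [w]
    rw [← Finset.prod_univ_sum T fun i t => φ i t (x i)]
    simp [hsum]
  have hgw : ∀ i, ∑ p ∈ Fintype.piFinset T, w p * g i (p i) = ∑ t ∈ T i, φ i t (x i) * g i t := by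
    intro i
    have h1 : ∀ p : ∀ i, X i, w p * g i (p i) =
        ∏ j, φ j (p j) (x j) * (if j = i then g j (p j) else 1) := by
      intro p
      rw [Finset.prod_mul_distrib, Finset.prod_ite_eq' Finset.univ i fun j => g j (p j)]
      simp [w]
    simp only [h1]
    rw [← Finset.prod_univ_sum T fun j t => φ j t (x j) * (if j = i then g j t else 1),
      Finset.prod_eq_single i]
    · simp
    · intro j _ hj
      simp [hj, hsum]
    · simp
  have heq : f x - ∑ i, ∑ t ∈ T i, φ i t (x i) * g i t =
      ∑ p ∈ Fintype.piFinset T, w p * (f x - ∑ i, g i (p i)) := by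
    simp only [mul_sub, Finset.sum_sub_distrib, ← Finset.sum_mul, hw1, one_mul, Finset.mul_sum]
    rw [Finset.sum_comm]
    simp only [hgw]
  rw [heq]
  calc _ ≤ ∑ p ∈ Fintype.piFinset T, |w p * (f x - ∑ i, g i (p i))| :=
        Finset.abs_sum_le_sum_abs _ _
    _ ≤ ∑ p ∈ Fintype.piFinset T, w p * (R + ε) := by
        refine Finset.sum_le_sum fun p hp => ?_
        rw [abs_mul, abs_of_nonneg (hw0 p)]
        by_cases hwp : w p = 0
        · simp [hwp]
        refine mul_le_mul_of_nonneg_left ?_ (hw0 p)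
        have hmem : (p, x) ∈ ⋂ i, V' i := Set.mem_iInter.2 fun i =>
          hVsub i (hsupp i _ _ (Finset.prod_ne_zero_iff.1 hwp i (Finset.mem_univ i)))
        rw [← hVeq] at hmem
        have hd : |f p - f x| < ε := hmem
        rw [abs_sub_comm] at hd
        have := abs_sub_le (f x) (f p) (∑ i, g i (p i))
        linarith [hg p hp]
    _ = R + ε := by rw [← Finset.sum_mul, hw1, one_mul]

theorem le_of_mem_minimalCycleValues {n : ℕ} {X : Fin n → Type*} {f : (∀ i, X i) → ℝ}
    (g : ∀ i, X i → ℝ) {e : ℝ} (he : ∀ x, |f x - ∑ i, g i (x i)| ≤ e) {v : ℝ}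
    (hv : v ∈ minimalCycleValues f) : v ≤ e := by
  obtain ⟨m, x, lam, -, -, hcyc, -, hnorm, rfl⟩ := hv
  have hzero : ∑ j, lam j * ∑ i, g i (x j i) = 0 := by
    simp only [Finset.mul_sum]
    rw [Finset.sum_comm]
    refine Finset.sum_eq_zero fun i _ => ?_
    rw [← Finset.sum_fiberwise_of_maps_to
      (fun j _ => Finset.mem_image_of_mem (fun j => x j i) (Finset.mem_univ j))]
    refine Finset.sum_eq_zero fun t _ => ?_
    rw [← zero_mul (g i t), ← hcyc i t, Finset.sum_mul]
    refine Finset.sum_congr rfl fun j hj => ?_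
    rw [(Finset.mem_filter.1 hj).2]
  have heq : ∑ j, lam j * f (x j) = ∑ j, lam j * (f (x j) - ∑ i, g i (x j i)) := by
    simp only [mul_sub, Finset.sum_sub_distrib, hzero, sub_zero]
  rw [heq]
  calc _ ≤ ∑ j, |lam j * (f (x j) - ∑ i, g i (x j i))| := Finset.abs_sum_le_sum_abs _ _
    _ ≤ ∑ j, |lam j| * e := Finset.sum_le_sum fun j _ => by
        rw [abs_mul]
        exact mul_le_mul_of_nonneg_left (he _) (abs_nonneg _)
    _ = e := by rw [← Finset.sum_mul, hnorm, one_mul]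

/-- Golomb's formula (in its corrected, stronger form): for compact Hausdorff
spaces `X₁,...,X_n` and `X = X₁ × ⋯ × X_n`, the error of best uniform
approximation of `f ∈ C(X)` by sums `∑ᵢ gᵢ(xᵢ)`, `gᵢ ∈ C(Xᵢ)`, equals the
supremum of `|∑ⱼ λⱼ f(xⱼ)|` over all minimal projection cycles
`{x₁,...,x_m} ⊆ X` with associated vectors normalized by `∑ⱼ |λⱼ| = 1`. -/
theorem stmt16 {n : ℕ} (X : Fin n → Type*) [∀ i, TopologicalSpace (X i)]
    [∀ i, CompactSpace (X i)] [∀ i, T2Space (X i)]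
    (f : (∀ i, X i) → ℝ) (hf : Continuous f) :
    sInf {e : ℝ | ∃ g : ∀ i, X i → ℝ, (∀ i, Continuous (g i)) ∧
        e = sSup (Set.range (fun x : ∀ i, X i => |f x - ∑ i, g i (x i)|))} =
    sSup {v : ℝ | ∃ (m : ℕ) (x : Fin m → ∀ i, X i) (lam : Fin m → ℝ),
        Function.Injective x ∧ (∀ j, lam j ≠ 0) ∧
        (∀ (i : Fin n) (t : X i),
          ∑ j ∈ Finset.univ.filter (fun j => x j i = t), lam j = 0) ∧
        (¬ ∃ (s : Finset (Fin m)) (mu : Fin m → ℝ), s ≠ Finset.univ ∧ s.Nonempty ∧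
          (∀ j ∈ s, mu j ≠ 0) ∧
          ∀ (i : Fin n) (t : X i),
            ∑ j ∈ s.filter (fun j => x j i = t), mu j = 0) ∧
        (∑ j, |lam j|) = 1 ∧
        v = |∑ j, lam j * f (x j)|} := by
  change sInf _ = sSup (minimalCycleValues f)
  have habove : ∀ g : ∀ i, X i → ℝ, (∀ i, Continuous (g i)) →
      ∀ x, |f x - ∑ i, g i (x i)| ≤
        sSup (Set.range fun x : ∀ i, X i => |f x - ∑ i, g i (x i)|) := by
    intro g hg x
    have hcont : Continuous fun x : ∀ i, X i => |f x - ∑ i, g i (x i)| := by fun_prop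
    exact le_csSup (isCompact_range hcont).bddAbove ⟨x, rfl⟩
  have hbdd : BddAbove (minimalCycleValues f) :=
    ⟨_, fun v hv => le_of_mem_minimalCycleValues _ (habove 0 fun _ => continuous_const) hv⟩
  have hnonneg : 0 ≤ sSup (minimalCycleValues f) := Real.sSup_nonneg (by
    rintro _ ⟨_, _, _, _, _, _, _, _, rfl⟩
    exact abs_nonneg _)
  refine le_antisymm (le_of_forall_pos_le_add fun ε hε => ?_)
    (le_csInf ⟨_, 0, fun _ => continuous_const, rfl⟩ ?_)
  · let _ : ∀ i, UniformSpace (X i) := fun i => uniformSpaceOfCompactR1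
    obtain ⟨g, hg, hle⟩ := exists_continuous_abs_sub_sum_le hf hε
      (exists_forall_mem_abs_sub_sum_le f hnonneg fun v hv => le_csSup hbdd hv)
    refine le_trans (csInf_le ⟨0, ?_⟩ ⟨g, hg, rfl⟩) (Real.sSup_le ?_ (by linarith))
    · rintro _ ⟨g, -, rfl⟩
      refine Real.sSup_nonneg ?_
      rintro _ ⟨x, rfl⟩
      exact abs_nonneg _
    · rintro _ ⟨x, rfl⟩
      exact hle x
  · rintro _ ⟨g, hg, rfl⟩
    refine Real.sSup_le (fun v hv => le_of_mem_minimalCycleValues g (habove g hg) hv) ?_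
    refine Real.sSup_nonneg ?_
    rintro _ ⟨x, rfl⟩
    exact abs_nonneg _
end

section
/- For any positive real numbers α and λ there exists a function σ : ℝ → ℝ which is infinitely differentiable on ℝ, sigmoidal, strictly increasing on (−∞, α), λ-strictly increasing on [α, +∞), and has the following property: for every continuous function f on [0,1]^d and every ε > 0 there exist real numbers d_p, c_{pq}, θ_{pq}, γ_p and vectors w^{pq} ∈ ℝ^d (p = 1, ..., 2d+2, q = 1, ..., d) such that |f(x) − ∑_{p=1}^{2d+2} d_p σ(∑_{q=1}^d c_{pq} σ(w^{pq}·x − θ_{pq}) − γ_p)| < ε for all x ∈ [0,1]^d. -/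
theorem exists_continuous_interpolation {ι : Type*} [Finite ι] {W : ι → ℝ}
    (hW : Function.Injective W) {y : ι → ℝ} {B : ℝ} (hB : 0 ≤ B) (hy : ∀ i, |y i| ≤ B) :
    ∃ g : C(ℝ, ℝ), (∀ i, g (W i) = y i) ∧ ∀ t, |g t| ≤ B := by
  classical
  have := Fintype.ofFinite ι
  let P := Lagrange.interpolate Finset.univ W y
  refine ⟨⟨fun t => max (-B) (min B (P.eval t)), by fun_prop⟩, fun i => ?_, fun t => ?_⟩
  · have h : P.eval (W i) = y i :=
      Lagrange.eval_interpolate_at_node _ hW.injOn (Finset.mem_univ i)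
    have := abs_le.1 (hy i)
    simp [h, this.1, this.2]
  · exact abs_le.2 ⟨le_max_left _ _, max_le (by linarith) (min_le_left _ _)⟩

/-- A perturbation making all the sums `∑ q, v q (k q)` distinct. -/
theorem exists_perturbation_injective (d L : ℕ) (a : Fin d → ℕ → ℝ) {δ : ℝ} (hδ : 0 < δ) :
    ∃ v : Fin d → ℕ → ℝ, (∀ q k, k < L → |v q k - a q k| ≤ δ) ∧
      Function.Injective fun k : Fin d → Fin L => ∑ q, v q (k q) := by
  let z : (Fin d → Fin L) → ℝ := fun k => ((finFunctionFinEquiv k : ℕ) : ℝ)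
  have hz : Function.Injective z := fun k k' h =>
    finFunctionFinEquiv.injective (Fin.val_injective (Nat.cast_injective h))
  have hzsum : ∀ k, z k = ∑ q, (k q : ℝ) * (L : ℝ) ^ (q : ℕ) := fun k => by
    simp [z]
  let A : (Fin d → Fin L) → ℝ := fun k => ∑ q, a q (k q)
  let bad : Set ℝ := Set.range fun kk : (Fin d → Fin L) × (Fin d → Fin L) =>
    (A kk.2 - A kk.1) / (z kk.1 - z kk.2)
  have hbad : bad.Finite := Set.finite_range _
  let C : ℝ := L * ∑ q : Fin d, (L : ℝ) ^ (q : ℕ) + 1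
  have hS : 0 ≤ ∑ q : Fin d, (L : ℝ) ^ (q : ℕ) := Finset.sum_nonneg fun _ _ => by positivity
  have hC : 0 < C := by positivity
  obtain ⟨s, hs, hsb⟩ := ((Set.Ioo_infinite (div_pos hδ hC)).sdiff hbad).nonempty
  refine ⟨fun q k => a q k + s * (k * (L : ℝ) ^ (q : ℕ)), fun q k hk => ?_, fun k k' h => ?_⟩
  · have h1 : (L : ℝ) ^ (q : ℕ) ≤ ∑ q : Fin d, (L : ℝ) ^ (q : ℕ) :=
      Finset.single_le_sum (f := fun q : Fin d => (L : ℝ) ^ (q : ℕ))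
        (fun _ _ => by positivity) (Finset.mem_univ q)
    have h2 : (k : ℝ) * (L : ℝ) ^ (q : ℕ) ≤ C := by
      have : (k : ℝ) ≤ L := by exact_mod_cast hk.le
      have := mul_le_mul this h1 (by positivity) (by positivity)
      linarith
    have h3 : s * ((k : ℝ) * (L : ℝ) ^ (q : ℕ)) ≤ s * C := by gcongr; exact hs.1.le
    have h4 : s * C < δ := (lt_div_iff₀ hC).1 hs.2
    have h5 : 0 ≤ s * ((k : ℝ) * (L : ℝ) ^ (q : ℕ)) := mul_nonneg hs.1.le (by positivity)
    rw [add_sub_cancel_left, abs_of_nonneg h5]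
    linarith
  · by_contra hne
    refine hsb ⟨(k, k'), ?_⟩
    have hne' : z k - z k' ≠ 0 := sub_ne_zero.2 fun h => hne (hz h)
    simp only [Finset.sum_add_distrib, ← Finset.mul_sum, ← hzsum] at h
    rw [div_eq_iff hne']
    simp only [A]
    linarith

/-- The continuous staircase with steps at heights `v k`, flat except for the last unit of each
period of length `N`. -/
noncomputable def staircase (N K : ℕ) (v : ℕ → ℝ) : C(ℝ, ℝ) where
  toFun s := v 0 + ∑ j ∈ Finset.range K, (v (j + 1) - v j) * max 0 (min 1 (s - (j * N + N - 1)))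
  continuous_toFun := by fun_prop

theorem staircase_apply {N K : ℕ} (hN : 0 < N) (v : ℕ → ℝ) {k : ℕ} (hk : k < K) {s : ℝ}
    (h1 : (k * N : ℝ) ≤ s) (h2 : s ≤ k * N + N) :
    staircase N K v s = v k + (v (k + 1) - v k) * max 0 (min 1 (s - (k * N + N - 1))) := by
  have key : ∀ j ∈ Finset.range K, (v (j + 1) - v j) * max 0 (min 1 (s - (j * N + N - 1))) =
      (if j < k then v (j + 1) - v j else 0) +
        if j = k then (v (k + 1) - v k) * max 0 (min 1 (s - (k * N + N - 1))) else 0 := by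
    intro j _
    rcases lt_trichotomy j k with h | rfl | h
    · have h' : ((j : ℝ) + 1) * N ≤ k * N := by gcongr; exact_mod_cast h
      rw [if_pos h, if_neg h.ne, min_eq_left (by linarith), max_eq_right (by norm_num)]
      ring
    · simp
    · have h' : ((k : ℝ) + 1) * N ≤ j * N := by gcongr; exact_mod_cast h
      have : (1 : ℝ) ≤ N := by exact_mod_cast hN
      rw [if_neg h.not_gt, if_neg h.ne', min_eq_right (by linarith), max_eq_left (by linarith)]
      ring
  change v 0 + ∑ j ∈ Finset.range K, _ = _
  rw [Finset.sum_congr rfl key, Finset.sum_add_distrib, Finset.sum_ite_eq',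
    if_pos (Finset.mem_range.2 hk), ← Finset.sum_filter]
  have : (Finset.range K).filter (· < k) = Finset.range k := by
    ext j; simp; omega
  rw [this, Finset.sum_range_sub]
  ring

/-- On the cells of the `p`-th shifted grid of mesh `N / m`, the inner sum takes distinct values, so
that a function of the inner sum can mimic `f / N` there. -/
theorem exists_inner_outer {d N : ℕ} (hN : 0 < N) (p : ℕ)
    (f : C(Fin d → unitInterval, ℝ)) {M η δ : ℝ}
    (hM : ∀ x, |f x| ≤ M) (h₀ : Fin d → C(unitInterval, ℝ)) (hδ : 0 < δ) {m : ℕ} (hm : 0 < m)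
    (hf : ∀ x y, dist x y ≤ (N : ℝ) / m → |f x - f y| ≤ η)
    (hh : ∀ q s t, dist s t ≤ (N : ℝ) / m → |h₀ q s - h₀ q t| ≤ δ) :
    ∃ (h : Fin d → C(unitInterval, ℝ)) (g : C(ℝ, ℝ)), (∀ q t, |h q t - h₀ q t| ≤ 2 * δ) ∧
      (∀ y, |g y| ≤ M / N) ∧
      ∀ x : Fin d → unitInterval, (∀ q, (⌊(m * x q : ℝ)⌋₊ + p) % N ≠ N - 1) →
        |g (∑ q, h q (x q)) - f x / N| ≤ η / N := by
  have hN' : (0 : ℝ) < N := by exact_mod_cast hN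
  have hm' : (0 : ℝ) < m := by exact_mod_cast hm
  let τ : ℕ → unitInterval := fun k => Set.projIcc 0 1 zero_le_one ((k * N - p : ℝ) / m)
  have hτ : ∀ (t : unitInterval) (k : ℕ), |(m * t + p - k * N : ℝ)| ≤ (N : ℝ) →
      dist t (τ k) ≤ (N : ℝ) / m := by
    intro t k h
    have h1 : t = Set.projIcc (0 : ℝ) 1 zero_le_one t := (Set.projIcc_val _ t).symm
    rw [Subtype.dist_eq, Real.dist_eq]
    nth_rewrite 1 [h1]
    refine (Set.abs_projIcc_sub_projIcc _).trans ?_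
    have h2 : (m * t + p - k * N : ℝ) = (t - (k * N - p) / m) * m := by field_simp; ring
    rwa [h2, abs_mul, abs_of_pos hm', ← le_div_iff₀ hm'] at h
  let L := m + p + 2
  obtain ⟨v, hv, hinj⟩ := exists_perturbation_injective d L (fun q k => h₀ q (τ k)) hδ
  have hM0 : 0 ≤ M := (abs_nonneg _).trans (hM 0)
  obtain ⟨g, hg, hgM⟩ := exists_continuous_interpolation hinj
    (y := fun k => f (fun q => τ (k q)) / N) (B := M / N) (by positivity) fun k => by
      rw [abs_div, abs_of_pos hN']
      gcongr
      exact hM _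
  let c : unitInterval → ℕ := fun t => (⌊(m * t : ℝ)⌋₊ + p) / N
  have hc1 : ∀ t : unitInterval, (c t * N : ℝ) ≤ m * t + p := fun t => by
    have h1 : c t * N ≤ ⌊(m * t : ℝ)⌋₊ + p := Nat.div_mul_le_self _ _
    have h2 : (⌊(m * t : ℝ)⌋₊ : ℝ) ≤ m * t := Nat.floor_le (mul_nonneg hm'.le t.2.1)
    have h3 : (c t * N : ℝ) ≤ ⌊(m * t : ℝ)⌋₊ + p := by exact_mod_cast h1
    linarith
  have hc2 : ∀ t : unitInterval, (m * t + p : ℝ) ≤ c t * N + N := fun t => by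
    have h1 : ⌊(m * t : ℝ)⌋₊ + p + 1 ≤ c t * N + N := by
      have := Nat.lt_div_mul_add (a := ⌊(m * t : ℝ)⌋₊ + p) hN
      exact this
    have h2 : (m * t : ℝ) < ⌊(m * t : ℝ)⌋₊ + 1 := Nat.lt_floor_add_one _
    have h3 : (⌊(m * t : ℝ)⌋₊ + p + 1 : ℝ) ≤ c t * N + N := by exact_mod_cast h1
    linarith
  have hcL : ∀ t : unitInterval, c t + 1 < L := fun t => by
    have h1 : c t ≤ ⌊(m * t : ℝ)⌋₊ + p := Nat.div_le_self _ _
    have h2 : ⌊(m * t : ℝ)⌋₊ ≤ m := Nat.floor_le_of_le (mul_le_of_le_one_right hm'.le t.2.2)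
    simp only [L]
    omega
  let h : Fin d → C(unitInterval, ℝ) := fun q =>
    (staircase N L (v q)).comp ⟨fun t : unitInterval => (m * t + p : ℝ), by fun_prop⟩
  have hh_eq : ∀ q t, h q t = v q (c t) + (v q (c t + 1) - v q (c t)) *
      max 0 (min 1 (m * t + p - (c t * N + N - 1) : ℝ)) := fun q t =>
    staircase_apply hN (v q) ((Nat.lt_succ_self _).trans (hcL t)) (hc1 t) (hc2 t)
  refine ⟨h, g, fun q t => ?_, hgM, fun x hx => ?_⟩
  · have near : ∀ k, k < L → |(m * t + p - k * N : ℝ)| ≤ (N : ℝ) → |v q k - h₀ q t| ≤ 2 * δ := by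
      intro k hk hkt
      have h1 := hv q k hk
      have h2 := hh q _ _ (hτ t k hkt)
      rw [abs_sub_comm] at h2
      have h3 := abs_sub_le (v q k) (h₀ q (τ k)) (h₀ q t)
      linarith
    have n0 := near (c t) ((Nat.lt_succ_self _).trans (hcL t))
      (abs_le.2 ⟨by linarith [hc1 t], by linarith [hc2 t]⟩)
    have n1 := near (c t + 1) (hcL t) (by
      push_cast
      exact abs_le.2 ⟨by linarith [hc1 t], by linarith [hc2 t]⟩)
    rw [hh_eq]
    set r : ℝ := max 0 (min 1 (m * t + p - (c t * N + N - 1) : ℝ))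
    have hr0 : 0 ≤ r := le_max_left _ _
    have hr1 : r ≤ 1 := max_le zero_le_one (min_le_left _ _)
    rw [abs_le] at n0 n1 ⊢
    constructor <;> nlinarith
  · have hsum : ∑ q, h q (x q) = ∑ q, v q (c (x q)) := by
      refine Finset.sum_congr rfl fun q _ => ?_
      have h1 : ⌊(m * x q : ℝ)⌋₊ + p + 1 ≤ c (x q) * N + (N - 1) := by
        have h2 := Nat.div_add_mod' (⌊(m * x q : ℝ)⌋₊ + p) N
        have h3 := Nat.mod_lt (⌊(m * x q : ℝ)⌋₊ + p) hN
        have h4 := hx q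
        change c (x q) * N + _ = _ at h2
        omega
      have h2 : (m * x q : ℝ) < ⌊(m * x q : ℝ)⌋₊ + 1 := Nat.lt_floor_add_one _
      have h3 : (⌊(m * x q : ℝ)⌋₊ + p + 1 : ℝ) ≤ c (x q) * N + (N - 1) := by
        rw [← Nat.cast_pred hN]
        exact_mod_cast h1
      rw [hh_eq, max_eq_left ((min_le_right _ _).trans (by linarith))]
      ring
    have hgx := hg fun q => ⟨c (x q), (Nat.lt_succ_self _).trans (hcL (x q))⟩
    simp only at hgx
    rw [hsum, hgx, ← sub_div, abs_div, abs_of_pos hN', abs_sub_comm]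
    gcongr
    refine hf _ _ ((dist_pi_le_iff (by positivity)).2 fun q => hτ _ _ ?_)
    exact abs_le.2 ⟨by linarith [hc1 (x q)], by linarith [hc2 (x q)]⟩

/-- Among the `N` shifted grids, at most `d` have a bad coordinate at a given point. -/
theorem card_bad_le {d N : ℕ} (n : Fin d → ℕ) :
    (Finset.univ.filter fun p : Fin N => ∃ q, (n q + p) % N = N - 1).card ≤ d := by
  have h : (Finset.univ.filter fun p : Fin N => ∃ q, (n q + p) % N = N - 1) =
      Finset.univ.biUnion fun q => Finset.univ.filter fun p : Fin N => (n q + p) % N = N - 1 := by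
    ext p; simp
  rw [h]
  refine (Finset.card_biUnion_le_card_mul _ _ 1 fun q _ => ?_).trans (by simp)
  refine Finset.card_le_one.2 fun a ha b hb => ?_
  simp only [Finset.mem_filter, Finset.mem_univ, true_and] at ha hb
  have := Nat.ModEq.add_left_cancel' (n q) (show n q + a ≡ n q + b [MOD N] from ha.trans hb.symm)
  exact Fin.ext (this.eq_of_lt_of_lt a.2 b.2)

/-- The superposition `x ↦ ∑ p, g p (∑ q, h p q (x q))`. -/
noncomputable def superposition {d N : ℕ} (g : Fin N → C(ℝ, ℝ))
    (h : Fin N → Fin d → C(unitInterval, ℝ)) :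
    C(Fin d → unitInterval, ℝ) :=
  ∑ p, (g p).comp (∑ q, (h p q).comp ⟨fun x => x q, by fun_prop⟩)

theorem superposition_apply {d N : ℕ} (g : Fin N → C(ℝ, ℝ))
    (h : Fin N → Fin d → C(unitInterval, ℝ))
    (x : Fin d → unitInterval) : superposition g h x = ∑ p, g p (∑ q, h p q (x q)) := by
  simp [superposition]

theorem continuous_superposition {d N : ℕ} (g : Fin N → C(ℝ, ℝ)) :
    Continuous (superposition (d := d) g) := by
  unfold superposition
  fun_prop

theorem superposition_add {d N : ℕ} (g g' : Fin N → C(ℝ, ℝ))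
    (h : Fin N → Fin d → C(unitInterval, ℝ)) :
    superposition (g + g') h = superposition g h + superposition g' h := by
  ext x
  simp [superposition_apply, Finset.sum_add_distrib]

theorem exists_superposition_norm_sub_le {d N : ℕ} (hNd : N = 2 * d + 1)
    (f : C(Fin d → unitInterval, ℝ)) {M : ℝ} (hM : 0 < M)
    (hf : ‖f‖ ≤ M) (h₀ : Fin N → Fin d → C(unitInterval, ℝ)) {δ : ℝ} (hδ : 0 < δ) :
    ∃ g h, dist h h₀ < δ ∧
      ‖f - superposition g h‖ ≤ (2 * d + 1 / 2) / (2 * d + 1) * M := by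
  have hN : 0 < N := by omega
  have hN' : (0 : ℝ) < N := by exact_mod_cast hN
  have hfM : ∀ x, |f x| ≤ M := fun x => (f.norm_coe_le_norm x).trans hf
  obtain ⟨r₁, hr₁, H₁⟩ := Metric.uniformContinuous_iff.1
    (CompactSpace.uniformContinuous_of_continuous f.continuous) (M / (2 * N)) (by positivity)
  have H₂ : ∃ r > 0, ∀ p q s t, dist s t < r → |h₀ p q s - h₀ p q t| ≤ δ / 3 := by
    have : UniformContinuous fun t p q => h₀ p q t :=
      CompactSpace.uniformContinuous_of_continuous (by fun_prop)
    obtain ⟨r, hr, H⟩ := Metric.uniformContinuous_iff.1 this (δ / 3) (by positivity)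
    refine ⟨r, hr, fun p q s t hst => ?_⟩
    exact (dist_pi_le_iff (by positivity)).1 ((dist_pi_le_iff (by positivity)).1 (H hst).le p) q
  obtain ⟨r₂, hr₂, H₂⟩ := H₂
  obtain ⟨m, hm⟩ := exists_nat_gt (N / min r₁ r₂ : ℝ)
  have hr : 0 < min r₁ r₂ := lt_min hr₁ hr₂
  have hm0 : (0 : ℝ) < m := (by positivity : (0 : ℝ) ≤ N / min r₁ r₂).trans_lt hm
  have hmesh : (N : ℝ) / m < min r₁ r₂ := by
    rw [div_lt_iff₀ hr] at hm
    rw [div_lt_iff₀ hm0]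
    linarith
  have key := fun p : Fin N => exists_inner_outer hN p f hfM (h₀ p) (δ := δ / 3) (by positivity)
    (by exact_mod_cast hm0 : 0 < m)
    (fun x y hxy => (H₁ (hxy.trans_lt (hmesh.trans_le (min_le_left _ _)))).le)
    (fun q s t hst => H₂ p q s t (hst.trans_lt (hmesh.trans_le (min_le_right _ _))))
  choose h g hh hg hfg using key
  refine ⟨g, h, ?_, ?_⟩
  · refine lt_of_le_of_lt ?_ (show 2 * (δ / 3) < δ by linarith)
    refine (dist_pi_le_iff (by positivity)).2 fun p => (dist_pi_le_iff (by positivity)).2 fun q => ?_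
    exact (ContinuousMap.dist_le (by positivity)).2 fun t => hh p q t
  · refine (ContinuousMap.norm_le _ (by positivity)).2 fun x => ?_
    have hterm : ∀ p : Fin N, |f x / N - g p (∑ q, h p q (x q))| ≤ M / (2 * N) / N +
        if (∃ q, (⌊(m * x q : ℝ)⌋₊ + p) % N = N - 1) then 2 * (M / N) else 0 := by
      intro p
      split_ifs with hb
      · have h1 : |f x / N| ≤ M / N := by
          rw [abs_div, abs_of_pos hN']; gcongr; exact hfM x
        have h2 := abs_sub (f x / N) (g p (∑ q, h p q (x q)))
        have h3 := hg p (∑ q, h p q (x q))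
        have h4 : 0 ≤ M / (2 * N) / N := by positivity
        linarith
      · rw [abs_sub_comm, add_zero]
        exact hfg p x (by simpa using hb)
    have hsum : (f - superposition g h) x = ∑ p, (f x / N - g p (∑ q, h p q (x q))) := by
      rw [Finset.sum_sub_distrib, ContinuousMap.sub_apply, superposition_apply]
      simp [field]
    rw [hsum, Real.norm_eq_abs]
    refine (Finset.abs_sum_le_sum_abs _ _).trans ((Finset.sum_le_sum fun p _ => hterm p).trans ?_)
    rw [Finset.sum_add_distrib, ← Finset.sum_filter, Finset.sum_const, Finset.sum_const]
    have hcard : ((Finset.univ.filter fun p : Fin N =>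
        ∃ q, (⌊(m * x q : ℝ)⌋₊ + p) % N = N - 1).card : ℝ) ≤ d := by
      exact_mod_cast card_bad_le fun q => ⌊(m * x q : ℝ)⌋₊
    have h2 := mul_le_mul_of_nonneg_right hcard (show 0 ≤ 2 * (M / N) by positivity)
    simp only [Finset.card_univ, Fintype.card_fin, nsmul_eq_mul]
    refine (add_le_add_right h2 _).trans ?_
    have : (N : ℝ) = 2 * d + 1 := by simp [hNd]
    rw [this]
    field_simp
    nlinarith

theorem exists_superposition_norm_sub_lt {d N : ℕ} (hNd : N = 2 * d + 1)
    (f : C(Fin d → unitInterval, ℝ))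
    {ε : ℝ} (hε : 0 < ε) :
    ∃ (g : Fin N → C(ℝ, ℝ)) (h : Fin N → Fin d → C(unitInterval, ℝ)), ‖f - superposition g h‖ < ε := by
  have hC : 0 < ‖f‖ + 1 := by positivity
  let θ : ℝ := (2 * d + 3 / 4) / (2 * d + 1)
  have hθ0 : 0 < θ := by positivity
  have hθ1 : θ < 1 := (div_lt_one (by positivity)).2 (by linarith)
  have claim : ∀ n : ℕ, ∃ (g : Fin N → C(ℝ, ℝ)) (h : Fin N → Fin d → C(unitInterval, ℝ)),
      ‖f - superposition g h‖ ≤ θ ^ n * (‖f‖ + 1) := by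
    intro n
    induction n with
    | zero =>
      refine ⟨0, 0, ?_⟩
      have : superposition (0 : Fin N → C(ℝ, ℝ)) (0 : Fin N → Fin d → C(unitInterval, ℝ)) = 0 := by
        ext x; simp [superposition_apply]
      rw [this, sub_zero]
      linarith
    | succ n ih =>
      obtain ⟨g, h, hgh⟩ := ih
      set M := θ ^ n * (‖f‖ + 1)
      have hM : 0 < M := by positivity
      have hτ : 0 < 1 / 4 / (2 * d + 1) * M := by positivity
      obtain ⟨δ, hδ, H⟩ := Metric.continuous_iff.1 (continuous_superposition g) h _ hτ
      obtain ⟨g', h', hh', hgh'⟩ := exists_superposition_norm_sub_le hNd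
        (f - superposition g h) hM hgh h hδ
      refine ⟨g + g', h', ?_⟩
      have e : f - superposition (g + g') h' =
          (f - superposition g h - superposition g' h') +
            (superposition g h - superposition g h') := by
        rw [superposition_add]; abel
      have h1 := norm_add_le (f - superposition g h - superposition g' h')
        (superposition g h - superposition g h')
      have h2 := H h' hh'
      rw [dist_comm, dist_eq_norm] at h2
      have h3 : (2 * d + 1 / 2) / (2 * d + 1) * M + 1 / 4 / (2 * d + 1) * M = θ * M := by
        simp only [θ]; ring
      rw [e, pow_succ', mul_assoc]
      linarith
  obtain ⟨n, hn⟩ := exists_pow_lt_of_lt_one (div_pos hε hC) hθ1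
  obtain ⟨g, h, hgh⟩ := claim n
  exact ⟨g, h, hgh.trans_lt ((lt_div_iff₀ hC).1 hn)⟩

theorem exists_countable_dense_polynomials : ∃ P : ℕ → Polynomial ℝ,
    ∀ (h : C(unitInterval, ℝ)) (ε : ℝ), 0 < ε →
      ∃ n, ∀ t : unitInterval, |h t - (P n).eval (t : ℝ)| < ε := by
  obtain ⟨s, hs, hsc, hsd⟩ := (TopologicalSpace.IsSeparable.of_separableSpace
    (polynomialFunctions unitInterval : Set C(unitInterval, ℝ))).exists_countable_dense_subset
  have hdense : ∀ h : C(unitInterval, ℝ), h ∈ closure s := fun h => by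
    have h1 : h ∈ closure (polynomialFunctions unitInterval : Set C(unitInterval, ℝ)) := by
      rw [← Subalgebra.topologicalClosure_coe, polynomialFunctions_closure_eq_top']
      trivial
    exact closure_minimal hsd isClosed_closure h1
  have hne : s.Nonempty := closure_nonempty_iff.1 ⟨0, hdense 0⟩
  obtain ⟨e, rfl⟩ := hsc.exists_eq_range hne
  have hP : ∀ n, ∃ P : Polynomial ℝ, Polynomial.toContinuousMapOnAlgHom unitInterval P = e n :=
    fun n => by
    simpa using hs ⟨n, rfl⟩
  choose P hP using hP
  refine ⟨P, fun h ε hε => ?_⟩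
  obtain ⟨_, ⟨n, rfl⟩, hn⟩ := Metric.mem_closure_iff.1 (hdense h) ε hε
  refine ⟨n, fun t => ?_⟩
  have := (ContinuousMap.dist_lt_iff hε).1 hn t
  rwa [← hP n, Real.dist_eq] at this

/-- Smooth functions supported in `(-2, 2)` can be placed side by side along `(α, ∞)`. -/
theorem exists_contDiff_concat (α : ℝ) {β : ℝ} (hβ : 0 ≤ β) {b : ℕ → ℝ → ℝ}
    (hb : ∀ n, ContDiff ℝ (⊤ : ℕ∞) (b n)) (hb0 : ∀ n t, 2 ≤ |t| → b n t = 0)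
    (hbβ : ∀ n t, |b n t| ≤ β / (n + 1)) :
    ∃ ρ : ℝ → ℝ, ContDiff ℝ (⊤ : ℕ∞) ρ ∧ (∀ t ≤ α, ρ t = 0) ∧ (∀ t, |ρ t| ≤ β) ∧
      Filter.Tendsto ρ Filter.atTop (nhds 0) ∧
      ∀ (n : ℕ) t, |t| < 2 → ρ (t + (α + 4 * n + 2)) = b n t := by
  let c : ℕ → ℝ := fun n => α + 4 * n + 2
  let ρ : ℝ → ℝ := fun t => ∑ᶠ n, b n (t - c n)
  have hρ : ∀ n t, |t - c n| < 2 → ρ t = b n (t - c n) := fun n t ht => by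
    refine finsum_eq_single _ n fun k hk => hb0 _ _ ?_
    rcases lt_or_gt_of_ne hk with h | h
    · have : (k + 1 : ℝ) ≤ n := by exact_mod_cast h
      exact le_abs.2 (.inl (by linarith [(abs_lt.1 ht).1]))
    · have : (n + 1 : ℝ) ≤ k := by exact_mod_cast h
      exact le_abs.2 (.inr (by linarith [(abs_lt.1 ht).2]))
  have hcases : ∀ t, ρ t = 0 ∨ ∃ n, |t - c n| < 2 ∧ ρ t = b n (t - c n) := fun t => by
    by_cases h : ∃ n, |t - c n| < 2
    · obtain ⟨n, hn⟩ := h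
      exact .inr ⟨n, hn, hρ n t hn⟩
    · push Not at h
      left
      simp only [ρ, hb0 _ _ (h _), finsum_zero]
  have hbound : ∀ t, |ρ t| ≤ β := fun t => by
    rcases hcases t with h | ⟨n, -, h⟩
    · simpa [h] using hβ
    · rw [h]
      exact (hbβ _ _).trans (div_le_self hβ (by linarith [(n.cast_nonneg : (0 : ℝ) ≤ n)]))
  have hdecay : ∀ t, α < t → |ρ t| ≤ 4 * β / (t - α) := fun t ht => by
    have ht' : 0 < t - α := sub_pos.2 ht
    rcases hcases t with h | ⟨n, hn, h⟩
    · rw [h, abs_zero]; positivity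
    · rw [h]
      refine (hbβ _ _).trans ?_
      rw [div_le_div_iff₀ (by positivity) ht']
      have : t - α ≤ 4 * (n + 1) := by linarith [(abs_lt.1 hn).2]
      nlinarith
  refine ⟨ρ, ?_, fun t ht => ?_, hbound, ?_, fun n t ht => ?_⟩
  · rw [← contMDiff_iff_contDiff]
    refine contMDiff_finsum (fun n => contMDiff_iff_contDiff.2
      ((hb n).comp (contDiff_id.sub contDiff_const))) fun t => ?_
    obtain ⟨K, hK⟩ := exists_nat_gt (t + 1 - α)
    refine ⟨Metric.ball t 1, Metric.ball_mem_nhds _ one_pos, (Set.finite_lt_nat K).subset ?_⟩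
    rintro n ⟨s, hs, hst⟩
    rw [Metric.mem_ball, Real.dist_eq] at hst
    have h1 : |s - c n| < 2 := by
      by_contra! h
      exact hs (hb0 _ _ h)
    have h2 : (n : ℝ) < K := by
      linarith [(abs_lt.1 hst).2, (abs_lt.1 h1).1, (n.cast_nonneg : (0 : ℝ) ≤ n)]
    exact_mod_cast h2
  · rcases hcases t with h | ⟨n, hn, -⟩
    · exact h
    · linarith [(abs_lt.1 hn).1, (n.cast_nonneg : (0 : ℝ) ≤ n)]
  · refine squeeze_zero_norm' (a := fun t => 4 * β / (t - α)) ?_ ?_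
    · filter_upwards [Filter.eventually_gt_atTop α] with t ht using hdecay t ht
    · exact Filter.Tendsto.const_div_atTop
        (Filter.tendsto_atTop_add_const_right _ (-α) Filter.tendsto_id) _
  · have h : t + (α + 4 * n + 2) - c n = t := by simp only [c]; ring
    rw [hρ n _ (by rwa [h]), h]

theorem expNegInvGlue_strictMonoOn : StrictMonoOn expNegInvGlue (Set.Ioi 0) := by
  intro x hx y hy hxy
  rw [Set.mem_Ioi] at hx hy
  simp only [expNegInvGlue, hx.not_ge, hy.not_ge, if_false]
  gcongr

theorem tendsto_expNegInvGlue_atTop :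
    Filter.Tendsto expNegInvGlue Filter.atTop (nhds 1) := by
  have h : Filter.Tendsto (fun x : ℝ => Real.exp (-x⁻¹)) Filter.atTop (nhds 1) := by
    have := (Real.continuous_exp.tendsto _).comp (tendsto_inv_atTop_zero (𝕜 := ℝ)).neg
    simpa [Function.comp_def] using this
  refine h.congr' ?_
  filter_upwards [Filter.eventually_gt_atTop 0] with x hx
  simp [expNegInvGlue, hx.not_ge]

/-- A smooth sigmoidal function whose graph contains, up to affine maps, approximations of all
continuous functions on the unit interval. -/
theorem exists_universal_sigmoid (α : ℝ) {lam : ℝ} (hlam : 0 < lam) :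
    ∃ σ : ℝ → ℝ,
      ContDiff ℝ (⊤ : ℕ∞) σ ∧
      Filter.Tendsto σ Filter.atBot (nhds 0) ∧
      Filter.Tendsto σ Filter.atTop (nhds 1) ∧
      StrictMonoOn σ (Set.Iio α) ∧
      (∃ u : ℝ → ℝ, StrictMonoOn u (Set.Ici α) ∧ ∀ x ∈ Set.Ici α, |σ x - u x| ≤ lam) ∧
      ∀ (h : C(unitInterval, ℝ)) (ε : ℝ), 0 < ε →
        ∃ a b θ : ℝ, ∀ t : unitInterval, |h t - (a + b * σ (t - θ))| < ε := by
  obtain ⟨P, hP⟩ := exists_countable_dense_polynomials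
  let χ : ContDiffBump (0 : ℝ) := ⟨1, 2, one_pos, one_lt_two⟩
  have hcont : ∀ n, ContDiff ℝ (⊤ : ℕ∞) fun t => χ t * (P n).eval t := fun n =>
    χ.contDiff.mul (by simpa using (P n).contDiff_aeval (𝕜 := ℝ) _)
  have hK : ∀ n, ∃ K, ∀ t, |χ t * (P n).eval t| ≤ K := fun n =>
    (hcont n).continuous.bounded_above_of_compact_support χ.hasCompactSupport.mul_right
  choose K hK using hK
  have hK0 : ∀ n, 0 ≤ K n := fun n => (abs_nonneg _).trans (hK n 0)
  let A : ℕ → ℝ := fun n => lam / 2 / (n + 1) / (K n + 1)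
  have hA : ∀ n, 0 < A n := fun n => by have := hK0 n; positivity
  obtain ⟨ρ, hρs, hρ0, hρb, hρt, hρe⟩ := exists_contDiff_concat α (half_pos hlam).le
    (b := fun n t => A n * (χ t * (P n).eval t)) (fun n => contDiff_const.mul (hcont n))
    (fun n t ht => by simp [χ.zero_of_le_dist (x := t) (by simpa [χ] using ht)])
    (fun n t => by
      have := hK0 n
      rw [abs_mul, abs_of_pos (hA n)]
      refine (mul_le_mul_of_nonneg_left (hK n t) (hA n).le).trans ?_
      rw [div_mul_eq_mul_div, div_le_iff₀ (by positivity)]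
      have : 0 ≤ lam / 2 / ((n : ℝ) + 1) := by positivity
      nlinarith)
  have hE : ContDiff ℝ (⊤ : ℕ∞) fun t => 1 - expNegInvGlue (α - t) :=
    contDiff_const.sub (expNegInvGlue.contDiff.comp (contDiff_const.sub contDiff_id))
  have hge : ∀ t, α ≤ t → 1 - expNegInvGlue (α - t) + ρ t = 1 + ρ t := fun t ht => by
    rw [expNegInvGlue.zero_of_nonpos (by linarith), sub_zero]
  refine ⟨fun t => 1 - expNegInvGlue (α - t) + ρ t, hE.add hρs, ?_, ?_, ?_,
    ⟨fun t => 1 - lam / 2 / (t - α + 1), ?_, ?_⟩, ?_⟩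
  · have h1 : Filter.Tendsto (fun t : ℝ => α - t) Filter.atBot Filter.atTop :=
      Filter.tendsto_atTop_add_const_left _ α Filter.tendsto_neg_atBot_atTop
    have h2 := (tendsto_expNegInvGlue_atTop.comp h1).const_sub 1
    rw [sub_self] at h2
    refine h2.congr' ?_
    filter_upwards [Filter.eventually_le_atBot α] with t ht
    simp [hρ0 t ht]
  · have h1 := hρt.const_add 1
    rw [add_zero] at h1
    refine h1.congr' ?_
    filter_upwards [Filter.eventually_ge_atTop α] with t ht using (hge t ht).symm
  · intro s hs t ht hst
    have := expNegInvGlue_strictMonoOn (Set.mem_Ioi.2 (sub_pos.2 ht))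
      (Set.mem_Ioi.2 (sub_pos.2 hs)) (sub_lt_sub_left hst α)
    simp only [hρ0 s (le_of_lt hs), hρ0 t (le_of_lt ht)]
    linarith
  · intro s hs t ht hst
    have hs' : α ≤ s := hs
    have : 0 < s - α + 1 := by linarith
    have := div_lt_div_of_pos_left (half_pos hlam) this (show s - α + 1 < t - α + 1 by linarith)
    simp only
    linarith
  · intro t ht
    have ht' : α ≤ t := ht
    have h1 : lam / 2 / (t - α + 1) ≤ lam / 2 := div_le_self (half_pos hlam).le (by linarith)
    have h2 : 0 ≤ lam / 2 / (t - α + 1) := div_nonneg (half_pos hlam).le (by linarith)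
    have h3 := abs_le.1 (hρb t)
    simp only [hge t ht']
    exact abs_le.2 ⟨by linarith, by linarith⟩
  · intro h ε hε
    obtain ⟨n, hn⟩ := hP h ε hε
    refine ⟨-(A n)⁻¹, (A n)⁻¹, -(α + 4 * n + 2), fun t => ?_⟩
    have ht : |(t : ℝ)| ≤ 1 := abs_le.2 ⟨by linarith [t.2.1], t.2.2⟩
    have hχ : χ t = 1 := χ.one_of_mem_closedBall (by simpa [χ] using ht)
    have hpos : α ≤ t + (α + 4 * n + 2) := by
      linarith [t.2.1, (n.cast_nonneg : (0 : ℝ) ≤ n)]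
    have hA' := (hA n).ne'
    have heq : -(A n)⁻¹ + (A n)⁻¹ * (1 - expNegInvGlue (α - (t - -(α + 4 * n + 2))) +
        ρ (t - -(α + 4 * n + 2))) = (P n).eval (t : ℝ) := by
      rw [sub_neg_eq_add, hge _ hpos, hρe n t (by linarith), hχ]
      field_simp
      ring
    simp only [heq]
    exact hn t

theorem dense_affine_image_of_forall_approx {σ : ℝ → ℝ} (hσ : Continuous σ)
    (H : ∀ (h : C(unitInterval, ℝ)) (ε : ℝ), 0 < ε →
      ∃ a b θ : ℝ, ∀ t : unitInterval, |h t - (a + b * σ (t - θ))| < ε) :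
    Dense {h : C(unitInterval, ℝ) | ∃ a b θ : ℝ, ∀ t, h t = a + b * σ (t - θ)} := by
  refine Metric.dense_iff.2 fun h r hr => ?_
  obtain ⟨a, b, θ, hab⟩ := H h r hr
  refine ⟨⟨fun t => a + b * σ (t - θ), by fun_prop⟩, ?_, a, b, θ, fun t => rfl⟩
  rw [Metric.mem_ball, dist_comm]
  exact (ContinuousMap.dist_lt_iff hr).2 hab

theorem exists_affine_approx_Icc {σ : ℝ → ℝ}
    (H : ∀ (h : C(unitInterval, ℝ)) (ε : ℝ), 0 < ε →
      ∃ a b θ : ℝ, ∀ t : unitInterval, |h t - (a + b * σ (t - θ))| < ε)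
    (g : C(ℝ, ℝ)) {R ε : ℝ} (hR : 0 < R) (hε : 0 < ε) :
    ∃ a b c γ : ℝ, ∀ y, |y| ≤ R → |g y - (a + b * σ (c * y - γ))| < ε := by
  obtain ⟨a, b, θ, hab⟩ := H ⟨fun t => g (2 * R * t - R), by fun_prop⟩ ε hε
  refine ⟨a, b, 1 / (2 * R), θ - 1 / 2, fun y hy => ?_⟩
  obtain ⟨h1, h2⟩ := abs_le.1 hy
  have h := hab ⟨(y + R) / (2 * R), div_nonneg (by linarith) (by positivity),
    (div_le_one (by positivity)).2 (by linarith)⟩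
  have e1 : 2 * R * ((y + R) / (2 * R)) - R = y := by field_simp; ring
  have e2 : (y + R) / (2 * R) - θ = 1 / (2 * R) * y - (θ - 1 / 2) := by field_simp; ring
  simpa only [ContinuousMap.coe_mk, e1, e2] using h

/-- Two hidden layer networks with an additive constant. -/
theorem exists_network_add_const {d : ℕ} {σ : ℝ → ℝ} (hσ : Continuous σ)
    (H : ∀ (h : C(unitInterval, ℝ)) (ε : ℝ), 0 < ε →
      ∃ a b θ : ℝ, ∀ t : unitInterval, |h t - (a + b * σ (t - θ))| < ε)
    (f : C(Fin d → unitInterval, ℝ)) {ε : ℝ} (hε : 0 < ε) :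
    ∃ (A : ℝ) (b γ : Fin (2 * d + 1) → ℝ) (c θ : Fin (2 * d + 1) → Fin d → ℝ),
      ∀ x : Fin d → unitInterval,
        |f x - (A + ∑ p, b p * σ ((∑ q, c p q * σ (x q - θ p q)) - γ p))| < ε := by
  obtain ⟨g, h₀, hgh₀⟩ := exists_superposition_norm_sub_lt rfl f (half_pos hε)
  have hD : Dense {h : Fin (2 * d + 1) → Fin d → C(unitInterval, ℝ) |
      ∀ p q, ∃ a b θ : ℝ, ∀ t, h p q t = a + b * σ (t - θ)} := by
    have h1 := dense_pi Set.univ fun (_ : Fin (2 * d + 1)) _ =>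
      dense_pi Set.univ fun (_ : Fin d) _ => dense_affine_image_of_forall_approx hσ H
    convert h1 using 1
    ext h
    simp [Set.mem_pi]
  obtain ⟨h, hU, hh⟩ := hD.inter_open_nonempty {h | ‖f - superposition g h‖ < ε / 2}
    (isOpen_lt (continuous_const.sub (continuous_superposition g)).norm continuous_const)
    ⟨h₀, hgh₀⟩
  choose a b θ hab using hh
  have hR : ∃ R > 0, ∀ (p : Fin (2 * d + 1)) (x : Fin d → unitInterval),
      |∑ q, h p q (x q)| ≤ R := by
    refine ⟨(∑ p, ∑ q, ‖h p q‖) + 1, by positivity, fun p x => ?_⟩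
    have h1 : |∑ q, h p q (x q)| ≤ ∑ q, ‖h p q‖ :=
      (Finset.abs_sum_le_sum_abs _ _).trans
        (Finset.sum_le_sum fun q _ => (h p q).norm_coe_le_norm (x q))
    have h2 : ∑ q, ‖h p q‖ ≤ ∑ p, ∑ q, ‖h p q‖ :=
      Finset.single_le_sum (f := fun p => ∑ q, ‖h p q‖)
        (fun p _ => Finset.sum_nonneg fun q _ => norm_nonneg _) (Finset.mem_univ p)
    linarith
  obtain ⟨R, hR, hhR⟩ := hR
  have hN : (0 : ℝ) < 2 * d + 1 := by positivity
  have outer := fun p => exists_affine_approx_Icc H (g p) hR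
    (show 0 < ε / 2 / (2 * d + 1) by positivity)
  choose A B C Γ hABC using outer
  refine ⟨∑ p, A p, B, fun p => Γ p - C p * ∑ q, a p q, fun p q => C p * b p q, θ, fun x => ?_⟩
  have harg : ∀ p, (∑ q, C p * b p q * σ (x q - θ p q)) - (Γ p - C p * ∑ q, a p q) =
      C p * (∑ q, h p q (x q)) - Γ p := fun p => by
    simp only [hab, Finset.sum_add_distrib, mul_add, Finset.mul_sum, mul_assoc]
    ring
  simp only [harg, ← Finset.sum_add_distrib]
  have h1 : |f x - ∑ p, g p (∑ q, h p q (x q))| < ε / 2 := by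
    rw [← superposition_apply]
    exact ((f - superposition g h).norm_coe_le_norm x).trans_lt hU
  have h2 : |∑ p, g p (∑ q, h p q (x q)) -
      ∑ p, (A p + B p * σ (C p * (∑ q, h p q (x q)) - Γ p))| ≤ ε / 2 := by
    rw [← Finset.sum_sub_distrib]
    refine (Finset.abs_sum_le_sum_abs _ _).trans
      ((Finset.sum_le_sum fun p _ => (hABC p _ (hhR p x)).le).trans ?_)
    simp only [Finset.sum_const, Finset.card_univ, Fintype.card_fin, nsmul_eq_mul]
    push_cast
    rw [mul_div_cancel₀ _ hN.ne']
  exact (abs_sub_le _ _ _).trans_lt (by linarith)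

/-- For any `α, λ > 0` there is an infinitely differentiable sigmoidal
function `σ : ℝ → ℝ`, strictly increasing on `(-∞, α)` and `λ`-strictly
increasing on `[α, +∞)`, such that two hidden layer neural networks with `d`
units in the first and `2d+2` units in the second hidden layer and activation
`σ` approximate every continuous function on `[0,1]^d` within any `ε > 0`. -/
theorem stmt18 (d : ℕ) (α lam : ℝ) (hα : 0 < α) (hlam : 0 < lam) :
    ∃ σ : ℝ → ℝ,
      ContDiff ℝ (⊤ : ℕ∞) σ ∧
      Filter.Tendsto σ Filter.atBot (nhds 0) ∧
      Filter.Tendsto σ Filter.atTop (nhds 1) ∧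
      StrictMonoOn σ (Set.Iio α) ∧
      (∃ u : ℝ → ℝ, StrictMonoOn u (Set.Ici α) ∧ ∀ x ∈ Set.Ici α, |σ x - u x| ≤ lam) ∧
      (∀ f : (Fin d → ℝ) → ℝ, ContinuousOn f (Set.Icc (0 : Fin d → ℝ) 1) →
        ∀ ε : ℝ, 0 < ε →
          ∃ (dcoef γ : Fin (2 * d + 2) → ℝ) (ccoef θ : Fin (2 * d + 2) → Fin d → ℝ)
            (w : Fin (2 * d + 2) → Fin d → Fin d → ℝ),
            ∀ x ∈ Set.Icc (0 : Fin d → ℝ) 1,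
              |f x - ∑ p, dcoef p *
                σ ((∑ q, ccoef p q * σ ((∑ t, w p q t * x t) - θ p q)) - γ p)| < ε) := by
  obtain ⟨σ, hσ, hbot, htop, hmono, hu, H⟩ := exists_universal_sigmoid α hlam
  refine ⟨σ, hσ, hbot, htop, hmono, hu, fun f hf ε hε => ?_⟩
  obtain ⟨T, hT⟩ := (htop.eventually_ne one_ne_zero).exists
  let F : C(Fin d → unitInterval, ℝ) :=
    ⟨fun x => f fun t => x t, hf.comp_continuous (by fun_prop) fun x =>
      ⟨fun t => (x t).2.1, fun t => (x t).2.2⟩⟩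
  obtain ⟨A, b, γ, c, θ, hnet⟩ := exists_network_add_const hσ.continuous H F hε
  refine ⟨Fin.snoc (α := fun _ => ℝ) b (A / σ T), Fin.snoc (α := fun _ => ℝ) γ (-T),
    Fin.snoc (α := fun _ => Fin d → ℝ) c 0, Fin.snoc (α := fun _ => Fin d → ℝ) θ 0,
    fun _ q => Pi.single q 1, fun x hx => ?_⟩
  have h := hnet fun t => ⟨x t, hx.1 t, hx.2 t⟩
  have hw : ∀ q, ∑ t, (Pi.single q 1 : Fin d → ℝ) t * x t = x q := fun q => by
    simp [Pi.single_apply]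
  simp only [hw]
  rw [Fin.sum_univ_castSucc]
  simp only [Fin.snoc_castSucc, Fin.snoc_last, Pi.zero_apply, zero_mul, Finset.sum_const_zero,
    zero_sub, neg_neg, div_mul_cancel₀ _ hT]
  rw [add_comm]
  exact h
end
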